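/- arXiv:1306.2696 — 5 statements merged into one kernel-verified Lean document; each statement's English description precedes it below -/
import Mathlib

section
/- Over finitely-branching NPLTS models, probabilistic ready-trace-distribution equivalence coincides with probabilistic failure-trace-distribution equivalence: for every finitely-branching NPLTS (S, A, →) and all s1, s2 ∈ S, s1 ≈_{PRTr,dis} s2 if and only if s1 ≈_{PFTr,dis} s2. -/
open scoped ENNReal
open Classical

noncomputable section

/-- Infimum of a set of values in `ℝ≥0∞`, taken to be `0` when the set is empty
(matching the paper's convention for `⊓` over an empty set). -/
def inf0 (X : Set ℝ≥0∞) : ℝ≥0∞ := if X = ∅ then 0 else sInf X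

/-- Probability mass that a discrete distribution assigns to a set of states. -/
def pmfMass {S : Type} (D : PMF S) (G : Set S) : ℝ≥0∞ := ∑' x : G, D x

/-- A nondeterministic and probabilistic labeled transition system (NPLTS):
a transition relation `→ ⊆ S × A × Distr(S)`, with `Distr(S)` the discrete
probability distributions over `S` (formalized as `PMF S`). -/
structure NPLTS (S A : Type) where
  trans : S → A → PMF S → Prop

namespace NPLTS

variable {S A : Type}

/-- The set of actions enabled at a state. -/
def enabled (L : NPLTS S A) (s : S) : Set A := {a | ∃ D, L.trans s a D}

/-- `s` has at least one outgoing transition. -/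
def hasTrans (L : NPLTS S A) (s : S) : Prop := ∃ a D, L.trans s a D

/-- A finite computation from `s`, recorded as the list of its steps
(action, target state): each step must come from some transition whose
distribution gives the target state positive probability. -/
def IsComp (L : NPLTS S A) : S → List (A × S) → Prop
  | _, [] => True
  | s, (a, s') :: c => (∃ D, L.trans s a D ∧ s' ∈ D.support) ∧ L.IsComp s' c

/-- The probability of a computation: the product of the step probabilities.
(In a fully probabilistic NPLTS, such as a resolution, the chosen transition
at each state is unique, so the supremum below selects its probability.) -/
def compProb (L : NPLTS S A) : S → List (A × S) → ℝ≥0∞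
  | _, [] => 1
  | s, (a, s') :: c => (⨆ (D : PMF S) (_ : L.trans s a D), D s') * L.compProb s' c

/-- The probability of a set of computations from `s`. -/
def probSet (L : NPLTS S A) (s : S) (C : Set (List (A × S))) : ℝ≥0∞ :=
  ∑' c : C, L.compProb s (c : List (A × S))

/-- Each state has finitely many outgoing transitions. -/
def FinitelyBranching (L : NPLTS S A) : Prop :=
  ∀ s : S, {p : A × PMF S | L.trans s p.1 p.2}.Finite

/-- Every transition concentrates all the probability mass in a single state. -/
def FullyNondeterministic (L : NPLTS S A) : Prop :=
  ∀ s a D, L.trans s a D → ∃ s', D = PMF.pure s'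

/-- Every state has at most one outgoing transition. -/
def FullyProbabilistic (L : NPLTS S A) : Prop :=
  ∀ (s : S) a₁ D₁ a₂ D₂, L.trans s a₁ D₁ → L.trans s a₂ D₂ → a₁ = a₂ ∧ D₁ = D₂

/-- Fully synchronous parallel composition of two NPLTSs over the same actions. -/
def par {S₁ S₂ : Type} (L₁ : NPLTS S₁ A) (L₂ : NPLTS S₂ A) : NPLTS (S₁ × S₂) A where
  trans p a D := ∃ D₁ D₂, L₁.trans p.1 a D₁ ∧ L₂.trans p.2 a D₂ ∧
    ∀ q : S₁ × S₂, D q = D₁ q.1 * D₂ q.2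

end NPLTS

/-- The final state of a computation starting at `s`. -/
def lastState {S A : Type} : S → List (A × S) → S
  | s, [] => s
  | _, (_, s') :: c => lastState s' c

/-- The trace (sequence of actions) of a computation. -/
def traceOf {S A : Type} (c : List (A × S)) : List A := c.map Prod.fst

/-- Stepwise compatibility of a computation with a decorated trace: the actions
match and after each step the (corresponding) reached state satisfies `P`
with respect to the decoration. -/
def decoComp {S A Z : Type} (P : S → Set A → Prop) (corr : Z → S) :
    List (A × Z) → List (A × Set A) → Prop
  | [], [] => True
  | (a, z) :: c, (b, X) :: φ => a = b ∧ P (corr z) X ∧ decoComp P corr c φ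
  | _, _ => False

/-- A resolution of `s` obtained via a deterministic scheduler: a fully
probabilistic NPLTS together with a correspondence function to the states of
the original NPLTS. -/
structure Resolution {S A : Type} (L : NPLTS S A) (s : S) where
  State : Type
  countable : Countable State
  lts : NPLTS State A
  corr : State → S
  init : State
  corr_init : corr init = s
  mimic : ∀ z a D, lts.trans z a D →
    ∃ D', L.trans (corr z) a D' ∧ ∀ z', D z' = D' (corr z')
  det : ∀ z a₁ a₂ D₁ D₂, lts.trans z a₁ D₁ → lts.trans z a₂ D₂ → a₁ = a₂ ∧ D₁ = D₂

namespace Resolution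

variable {S A : Type} {L : NPLTS S A} {s : S}

/-- Probability of a set of computations of the resolution from its initial state. -/
def prob (R : Resolution L s) (C : Set (List (A × R.State))) : ℝ≥0∞ :=
  R.lts.probSet R.init C

/-- `CC(z_s, α)`: the α-compatible computations from the initial state. -/
def cc (R : Resolution L s) (α : List A) : Set (List (A × R.State)) :=
  {c | R.lts.IsComp R.init c ∧ traceOf c = α}

/-- `CCC(z_s, α)`: the completed α-compatible computations (the corresponding
final state has no outgoing transitions in the original NPLTS). -/
def ccc (R : Resolution L s) (α : List A) : Set (List (A × R.State)) :=
  {c | c ∈ R.cc α ∧ ¬ L.hasTrans (R.corr (lastState R.init c))}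

/-- `FCC(z_s, (α, F))`: α-compatible computations whose corresponding final
state enables no action of the failure set `F`. -/
def fcc (R : Resolution L s) (α : List A) (F : Set A) : Set (List (A × R.State)) :=
  {c | c ∈ R.cc α ∧ ∀ f ∈ F, f ∉ L.enabled (R.corr (lastState R.init c))}

/-- `RCC(z_s, (α, Rd))`: α-compatible computations whose corresponding final
state enables exactly the ready set `Rd`. -/
def rcc (R : Resolution L s) (α : List A) (Rd : Set A) : Set (List (A × R.State)) :=
  {c | c ∈ R.cc α ∧ L.enabled (R.corr (lastState R.init c)) = Rd}

/-- `FTCC(z_s, φ)`: computations compatible with the failure trace `φ`. -/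
def ftcc (R : Resolution L s) (φ : List (A × Set A)) : Set (List (A × R.State)) :=
  {c | R.lts.IsComp R.init c ∧
    decoComp (fun t F => ∀ f ∈ F, f ∉ L.enabled t) R.corr c φ}

/-- `RTCC(z_s, ρ)`: computations compatible with the ready trace `ρ`. -/
def rtcc (R : Resolution L s) (ρ : List (A × Set A)) : Set (List (A × R.State)) :=
  {c | R.lts.IsComp R.init c ∧ decoComp (fun t X => L.enabled t = X) R.corr c ρ}

/-- `R ∈ Res_α(s)`: the resolution has no (maximal) computation corresponding
to a proper prefix of an α-compatible computation of the original NPLTS. -/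
def InResAlpha (R : Resolution L s) (α : List A) : Prop :=
  ¬ ∃ c : List (A × R.State), R.lts.IsComp R.init c ∧
      ¬ R.lts.hasTrans (lastState R.init c) ∧
      ∃ c' : List (A × S), L.IsComp s c' ∧ traceOf c' = α ∧
        (c.map fun p => (p.1, R.corr p.2)) <+: c' ∧ c.length < c'.length

/-- A state of the resolution reachable from its initial state. -/
def reachable (R : Resolution L s) (z : R.State) : Prop :=
  ∃ c, R.lts.IsComp R.init c ∧ lastState R.init c = z

/-- A maximal resolution: it cannot be further extended, i.e. every reachable
state whose corresponding state has an outgoing transition has one too. -/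
def Maximal (R : Resolution L s) : Prop :=
  ∀ z, R.reachable z → L.hasTrans (R.corr z) → R.lts.hasTrans z

/-- `SC(z_{s,o})`: successful computations of a resolution of a configuration
of an interaction system (the test component of the final configuration is
the success state `ω`). -/
def sc {S O : Type} {I : NPLTS (S × O) A} {cfg : S × O}
    (R : Resolution I cfg) (ω : O) : Set (List (A × R.State)) :=
  {c | R.lts.IsComp R.init c ∧ (R.corr (lastState R.init c)).2 = ω}

/-- `SCC(z_{s,o}, α)`: successful α-compatible computations. -/
def scc {S O : Type} {I : NPLTS (S × O) A} {cfg : S × O}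
    (R : Resolution I cfg) (ω : O) (α : List A) : Set (List (A × R.State)) :=
  {c | (R.lts.IsComp R.init c ∧ (R.corr (lastState R.init c)).2 = ω) ∧ traceOf c = α}

end Resolution

section Equivalences

variable {S A : Type} (L : NPLTS S A)

/-! ### Trace-based equivalences -/

/-- Probabilistic trace-distribution equivalence `≈_{PTr,dis}`. -/
def PTrDis (s₁ s₂ : S) : Prop :=
  (∀ R₁ : Resolution L s₁, ∃ R₂ : Resolution L s₂,
    ∀ α : List A, R₁.prob (R₁.cc α) = R₂.prob (R₂.cc α)) ∧
  (∀ R₂ : Resolution L s₂, ∃ R₁ : Resolution L s₁,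
    ∀ α : List A, R₂.prob (R₂.cc α) = R₁.prob (R₁.cc α))

/-- Probabilistic trace equivalence `≈_{PTr}`. -/
def PTr (s₁ s₂ : S) : Prop :=
  ∀ α : List A,
    (∀ R₁ : Resolution L s₁, ∃ R₂ : Resolution L s₂,
      R₁.prob (R₁.cc α) = R₂.prob (R₂.cc α)) ∧
    (∀ R₂ : Resolution L s₂, ∃ R₁ : Resolution L s₁,
      R₂.prob (R₂.cc α) = R₁.prob (R₁.cc α))

/-- The set of values `prob(CC(z_s, α))` over the resolutions in `Res_α(s)`. -/
def ccVals (s : S) (α : List A) : Set ℝ≥0∞ :=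
  {p | ∃ R : Resolution L s, R.InResAlpha α ∧ p = R.prob (R.cc α)}

/-- Probabilistic ⊔⊓-trace equivalence `≈_{PTr,⊔⊓}`. -/
def PTrSupInf (s₁ s₂ : S) : Prop :=
  ∀ α : List A,
    sSup (ccVals L s₁ α) = sSup (ccVals L s₂ α) ∧
    inf0 (ccVals L s₁ α) = inf0 (ccVals L s₂ α)

/-- Probabilistic completed-trace-distribution equivalence `≈_{PCTr,dis}`. -/
def PCTrDis (s₁ s₂ : S) : Prop :=
  (∀ R₁ : Resolution L s₁, ∃ R₂ R₂' : Resolution L s₂, ∀ α : List A,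
    R₁.prob (R₁.cc α) = R₂.prob (R₂.cc α) ∧
    R₁.prob (R₁.ccc α) = R₂'.prob (R₂'.ccc α)) ∧
  (∀ R₂ : Resolution L s₂, ∃ R₁ R₁' : Resolution L s₁, ∀ α : List A,
    R₂.prob (R₂.cc α) = R₁.prob (R₁.cc α) ∧
    R₂.prob (R₂.ccc α) = R₁'.prob (R₁'.ccc α))

/-- Probabilistic completed-trace equivalence `≈_{PCTr}`. -/
def PCTr (s₁ s₂ : S) : Prop :=
  ∀ α : List A,
    (∀ R₁ : Resolution L s₁, ∃ R₂ R₂' : Resolution L s₂,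
      R₁.prob (R₁.cc α) = R₂.prob (R₂.cc α) ∧
      R₁.prob (R₁.ccc α) = R₂'.prob (R₂'.ccc α)) ∧
    (∀ R₂ : Resolution L s₂, ∃ R₁ R₁' : Resolution L s₁,
      R₂.prob (R₂.cc α) = R₁.prob (R₁.cc α) ∧
      R₂.prob (R₂.ccc α) = R₁'.prob (R₁'.ccc α))

/-- The set of values `prob(CCC(z_s, α))` over the resolutions in `Res_α(s)`. -/
def cccVals (s : S) (α : List A) : Set ℝ≥0∞ :=
  {p | ∃ R : Resolution L s, R.InResAlpha α ∧ p = R.prob (R.ccc α)}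

/-- Probabilistic ⊔⊓-completed-trace equivalence `≈_{PCTr,⊔⊓}`. -/
def PCTrSupInf (s₁ s₂ : S) : Prop :=
  ∀ α : List A,
    (sSup (ccVals L s₁ α) = sSup (ccVals L s₂ α) ∧
     inf0 (ccVals L s₁ α) = inf0 (ccVals L s₂ α)) ∧
    (sSup (cccVals L s₁ α) = sSup (cccVals L s₂ α) ∧
     inf0 (cccVals L s₁ α) = inf0 (cccVals L s₂ α))

/-- Probabilistic failure-distribution equivalence `≈_{PF,dis}`. -/
def PFDis (s₁ s₂ : S) : Prop :=
  (∀ R₁ : Resolution L s₁, ∃ R₂ : Resolution L s₂, ∀ (α : List A) (F : Set A),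
    R₁.prob (R₁.fcc α F) = R₂.prob (R₂.fcc α F)) ∧
  (∀ R₂ : Resolution L s₂, ∃ R₁ : Resolution L s₁, ∀ (α : List A) (F : Set A),
    R₂.prob (R₂.fcc α F) = R₁.prob (R₁.fcc α F))

/-- Probabilistic failure equivalence `≈_{PF}`. -/
def PF (s₁ s₂ : S) : Prop :=
  ∀ (α : List A) (F : Set A),
    (∀ R₁ : Resolution L s₁, ∃ R₂ : Resolution L s₂,
      R₁.prob (R₁.fcc α F) = R₂.prob (R₂.fcc α F)) ∧
    (∀ R₂ : Resolution L s₂, ∃ R₁ : Resolution L s₁,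
      R₂.prob (R₂.fcc α F) = R₁.prob (R₁.fcc α F))

/-- The set of values `prob(FCC(z_s, (α, F)))` over the resolutions in `Res_α(s)`. -/
def fccVals (s : S) (α : List A) (F : Set A) : Set ℝ≥0∞ :=
  {p | ∃ R : Resolution L s, R.InResAlpha α ∧ p = R.prob (R.fcc α F)}

/-- Probabilistic ⊔⊓-failure equivalence `≈_{PF,⊔⊓}`. -/
def PFSupInf (s₁ s₂ : S) : Prop :=
  ∀ (α : List A) (F : Set A),
    sSup (fccVals L s₁ α F) = sSup (fccVals L s₂ α F) ∧
    inf0 (fccVals L s₁ α F) = inf0 (fccVals L s₂ α F)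

/-- Probabilistic failure-trace-distribution equivalence `≈_{PFTr,dis}`. -/
def PFTrDis (s₁ s₂ : S) : Prop :=
  (∀ R₁ : Resolution L s₁, ∃ R₂ : Resolution L s₂, ∀ φ : List (A × Set A),
    R₁.prob (R₁.ftcc φ) = R₂.prob (R₂.ftcc φ)) ∧
  (∀ R₂ : Resolution L s₂, ∃ R₁ : Resolution L s₁, ∀ φ : List (A × Set A),
    R₂.prob (R₂.ftcc φ) = R₁.prob (R₁.ftcc φ))

/-- Probabilistic failure-trace equivalence `≈_{PFTr}`. -/
def PFTr (s₁ s₂ : S) : Prop :=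
  ∀ φ : List (A × Set A),
    (∀ R₁ : Resolution L s₁, ∃ R₂ : Resolution L s₂,
      R₁.prob (R₁.ftcc φ) = R₂.prob (R₂.ftcc φ)) ∧
    (∀ R₂ : Resolution L s₂, ∃ R₁ : Resolution L s₁,
      R₂.prob (R₂.ftcc φ) = R₁.prob (R₁.ftcc φ))

/-- The set of values `prob(FTCC(z_s, φ))` over the resolutions in
`Res_{a₁…aₙ}(s)`, where `a₁…aₙ` is the trace underlying `φ`. -/
def ftccVals (s : S) (φ : List (A × Set A)) : Set ℝ≥0∞ :=
  {p | ∃ R : Resolution L s, R.InResAlpha (φ.map Prod.fst) ∧ p = R.prob (R.ftcc φ)}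

/-- Probabilistic ⊔⊓-failure-trace equivalence `≈_{PFTr,⊔⊓}`. -/
def PFTrSupInf (s₁ s₂ : S) : Prop :=
  ∀ φ : List (A × Set A),
    sSup (ftccVals L s₁ φ) = sSup (ftccVals L s₂ φ) ∧
    inf0 (ftccVals L s₁ φ) = inf0 (ftccVals L s₂ φ)

/-- Probabilistic readiness-distribution equivalence `≈_{PR,dis}`. -/
def PRDis (s₁ s₂ : S) : Prop :=
  (∀ R₁ : Resolution L s₁, ∃ R₂ : Resolution L s₂, ∀ (α : List A) (Rd : Set A),
    R₁.prob (R₁.rcc α Rd) = R₂.prob (R₂.rcc α Rd)) ∧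
  (∀ R₂ : Resolution L s₂, ∃ R₁ : Resolution L s₁, ∀ (α : List A) (Rd : Set A),
    R₂.prob (R₂.rcc α Rd) = R₁.prob (R₁.rcc α Rd))

/-- Probabilistic readiness equivalence `≈_{PR}`. -/
def PR (s₁ s₂ : S) : Prop :=
  ∀ (α : List A) (Rd : Set A),
    (∀ R₁ : Resolution L s₁, ∃ R₂ : Resolution L s₂,
      R₁.prob (R₁.rcc α Rd) = R₂.prob (R₂.rcc α Rd)) ∧
    (∀ R₂ : Resolution L s₂, ∃ R₁ : Resolution L s₁,
      R₂.prob (R₂.rcc α Rd) = R₁.prob (R₁.rcc α Rd))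

/-- The set of values `prob(RCC(z_s, (α, Rd)))` over the resolutions in `Res_α(s)`. -/
def rccVals (s : S) (α : List A) (Rd : Set A) : Set ℝ≥0∞ :=
  {p | ∃ R : Resolution L s, R.InResAlpha α ∧ p = R.prob (R.rcc α Rd)}

/-- Probabilistic ⊔⊓-readiness equivalence `≈_{PR,⊔⊓}`. -/
def PRSupInf (s₁ s₂ : S) : Prop :=
  ∀ (α : List A) (Rd : Set A),
    sSup (rccVals L s₁ α Rd) = sSup (rccVals L s₂ α Rd) ∧
    inf0 (rccVals L s₁ α Rd) = inf0 (rccVals L s₂ α Rd)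

/-- Probabilistic ready-trace-distribution equivalence `≈_{PRTr,dis}`. -/
def PRTrDis (s₁ s₂ : S) : Prop :=
  (∀ R₁ : Resolution L s₁, ∃ R₂ : Resolution L s₂, ∀ ρ : List (A × Set A),
    R₁.prob (R₁.rtcc ρ) = R₂.prob (R₂.rtcc ρ)) ∧
  (∀ R₂ : Resolution L s₂, ∃ R₁ : Resolution L s₁, ∀ ρ : List (A × Set A),
    R₂.prob (R₂.rtcc ρ) = R₁.prob (R₁.rtcc ρ))

/-- Probabilistic ready-trace equivalence `≈_{PRTr}`. -/
def PRTr (s₁ s₂ : S) : Prop :=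
  ∀ ρ : List (A × Set A),
    (∀ R₁ : Resolution L s₁, ∃ R₂ : Resolution L s₂,
      R₁.prob (R₁.rtcc ρ) = R₂.prob (R₂.rtcc ρ)) ∧
    (∀ R₂ : Resolution L s₂, ∃ R₁ : Resolution L s₁,
      R₂.prob (R₂.rtcc ρ) = R₁.prob (R₁.rtcc ρ))

/-- The set of values `prob(RTCC(z_s, ρ))` over the resolutions in
`Res_{a₁…aₙ}(s)`, where `a₁…aₙ` is the trace underlying `ρ`. -/
def rtccVals (s : S) (ρ : List (A × Set A)) : Set ℝ≥0∞ :=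
  {p | ∃ R : Resolution L s, R.InResAlpha (ρ.map Prod.fst) ∧ p = R.prob (R.rtcc ρ)}

/-- Probabilistic ⊔⊓-ready-trace equivalence `≈_{PRTr,⊔⊓}`. -/
def PRTrSupInf (s₁ s₂ : S) : Prop :=
  ∀ ρ : List (A × Set A),
    sSup (rtccVals L s₁ ρ) = sSup (rtccVals L s₂ ρ) ∧
    inf0 (rtccVals L s₁ ρ) = inf0 (rtccVals L s₂ ρ)

end Equivalences

/-! ### Tests and testing equivalences -/

/-- A nondeterministic and probabilistic test (NPT): a finite NPLTS (finitely
many states, finitely many outgoing transitions per state, acyclic) with a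
distinguished success state `succ` having no outgoing transitions. -/
structure NPT (A : Type) where
  O : Type
  lts : NPLTS O A
  succ : O
  fin : Finite O
  finTrans : ∀ o : O, {p : A × PMF O | lts.trans o p.1 p.2}.Finite
  acyclic : ∀ (o : O) (c : List (A × O)), lts.IsComp o c → c ≠ [] → lastState o c ≠ o
  succ_stop : ∀ a D, ¬ lts.trans succ a D

section Testing

variable {S A : Type} (L : NPLTS S A)

/-- The set of success probabilities over the maximal resolutions of the
configuration `(s, o)` of the interaction system of `L` and `T`. -/
def scVals (T : NPT A) (s : S) (o : T.O) : Set ℝ≥0∞ :=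
  {p | ∃ R : Resolution (L.par T.lts) (s, o), R.Maximal ∧ p = R.prob (R.sc T.succ)}

/-- Probabilistic ⊔⊓-testing equivalence `≈_{PTe-⊔⊓}`. -/
def PTeSupInf (s₁ s₂ : S) : Prop :=
  ∀ (T : NPT A) (o : T.O),
    sSup (scVals L T s₁ o) = sSup (scVals L T s₂ o) ∧
    inf0 (scVals L T s₁ o) = inf0 (scVals L T s₂ o)

/-- Probabilistic ∀∃-testing equivalence `≈_{PTe-∀∃}`. -/
def PTeAE (s₁ s₂ : S) : Prop :=
  ∀ (T : NPT A) (o : T.O),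
    (∀ R₁ : Resolution (L.par T.lts) (s₁, o), R₁.Maximal →
      ∃ R₂ : Resolution (L.par T.lts) (s₂, o), R₂.Maximal ∧
        R₁.prob (R₁.sc T.succ) = R₂.prob (R₂.sc T.succ)) ∧
    (∀ R₂ : Resolution (L.par T.lts) (s₂, o), R₂.Maximal →
      ∃ R₁ : Resolution (L.par T.lts) (s₁, o), R₁.Maximal ∧
        R₂.prob (R₂.sc T.succ) = R₁.prob (R₁.sc T.succ))

/-- Probabilistic trace-by-trace-distribution testing equivalence `≈_{PTe-tbt,dis}`. -/
def PTeTbtDis (s₁ s₂ : S) : Prop :=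
  ∀ (T : NPT A) (o : T.O),
    (∀ R₁ : Resolution (L.par T.lts) (s₁, o), R₁.Maximal →
      ∃ R₂ : Resolution (L.par T.lts) (s₂, o), R₂.Maximal ∧ ∀ α : List A,
        ((R₁.ccc α).Nonempty → (R₂.ccc α).Nonempty) ∧
        R₁.prob (R₁.scc T.succ α) = R₂.prob (R₂.scc T.succ α)) ∧
    (∀ R₂ : Resolution (L.par T.lts) (s₂, o), R₂.Maximal →
      ∃ R₁ : Resolution (L.par T.lts) (s₁, o), R₁.Maximal ∧ ∀ α : List A,
        ((R₂.ccc α).Nonempty → (R₁.ccc α).Nonempty) ∧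
        R₂.prob (R₂.scc T.succ α) = R₁.prob (R₁.scc T.succ α))

/-- Probabilistic trace-by-trace testing equivalence `≈_{PTe-tbt}`. -/
def PTeTbt (s₁ s₂ : S) : Prop :=
  ∀ (T : NPT A) (o : T.O) (α : List A),
    (∀ R₁ : Resolution (L.par T.lts) (s₁, o), R₁.Maximal → (R₁.ccc α).Nonempty →
      ∃ R₂ : Resolution (L.par T.lts) (s₂, o), R₂.Maximal ∧ (R₂.ccc α).Nonempty ∧
        R₁.prob (R₁.scc T.succ α) = R₂.prob (R₂.scc T.succ α)) ∧
    (∀ R₂ : Resolution (L.par T.lts) (s₂, o), R₂.Maximal → (R₂.ccc α).Nonempty →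
      ∃ R₁ : Resolution (L.par T.lts) (s₁, o), R₁.Maximal ∧ (R₁.ccc α).Nonempty ∧
        R₂.prob (R₂.scc T.succ α) = R₁.prob (R₁.scc T.succ α))

/-- The set of values `prob(SCC(z_{s,o}, α))` over `Res_{max,C,α}(s, o)`. -/
def sccVals (T : NPT A) (s : S) (o : T.O) (α : List A) : Set ℝ≥0∞ :=
  {p | ∃ R : Resolution (L.par T.lts) (s, o), R.Maximal ∧ (R.ccc α).Nonempty ∧
    p = R.prob (R.scc T.succ α)}

/-- Probabilistic ⊔⊓-trace-by-trace testing equivalence `≈_{PTe-tbt,⊔⊓}`. -/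
def PTeTbtSupInf (s₁ s₂ : S) : Prop :=
  ∀ (T : NPT A) (o : T.O) (α : List A),
    ((∃ R : Resolution (L.par T.lts) (s₁, o), R.Maximal ∧ (R.ccc α).Nonempty) ↔
     (∃ R : Resolution (L.par T.lts) (s₂, o), R.Maximal ∧ (R.ccc α).Nonempty)) ∧
    sSup (sccVals L T s₁ o α) = sSup (sccVals L T s₂ o α) ∧
    inf0 (sccVals L T s₁ o α) = inf0 (sccVals L T s₂ o α)

end Testing

/-! ### Bisimulation equivalences -/

section Bisimulations

variable {S A : Type} (L : NPLTS S A)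

/-- `G` is a union of equivalence classes of `B` (a "group of classes"). -/
def BClosed (B : S → S → Prop) (G : Set S) : Prop :=
  ∀ x y, B x y → x ∈ G → y ∈ G

/-- A probabilistic group-distribution bisimulation. -/
def IsPBDis (B : S → S → Prop) : Prop :=
  Equivalence B ∧ ∀ s₁ s₂, B s₁ s₂ → ∀ a D₁, L.trans s₁ a D₁ →
    ∃ D₂, L.trans s₂ a D₂ ∧ ∀ G : Set S, BClosed B G → pmfMass D₁ G = pmfMass D₂ G

/-- Probabilistic group-distribution bisimilarity `≈_{PB,dis}`. -/
def PBDis (s₁ s₂ : S) : Prop := ∃ B, IsPBDis L B ∧ B s₁ s₂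

/-- A probabilistic bisimulation (class groups considered one at a time). -/
def IsPB (B : S → S → Prop) : Prop :=
  Equivalence B ∧ ∀ s₁ s₂, B s₁ s₂ → ∀ G : Set S, BClosed B G →
    ∀ a D₁, L.trans s₁ a D₁ →
      ∃ D₂, L.trans s₂ a D₂ ∧ pmfMass D₁ G = pmfMass D₂ G

/-- Probabilistic bisimilarity `≈_{PB}`. -/
def PB (s₁ s₂ : S) : Prop := ∃ B, IsPB L B ∧ B s₁ s₂

/-- The set of values `D(∪G)` over the `a`-transitions of `s`. -/
def massVals (s : S) (a : A) (G : Set S) : Set ℝ≥0∞ :=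
  {p | ∃ D, L.trans s a D ∧ p = pmfMass D G}

/-- A probabilistic ⊔⊓-bisimulation. -/
def IsPBSupInf (B : S → S → Prop) : Prop :=
  Equivalence B ∧ ∀ s₁ s₂, B s₁ s₂ → ∀ G : Set S, BClosed B G → ∀ a : A,
    ((∃ D, L.trans s₁ a D) ↔ (∃ D, L.trans s₂ a D)) ∧
    sSup (massVals L s₁ a G) = sSup (massVals L s₂ a G) ∧
    inf0 (massVals L s₁ a G) = inf0 (massVals L s₂ a G)

/-- Probabilistic ⊔⊓-bisimilarity `≈_{PB,⊔⊓}`. -/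
def PBSupInf (s₁ s₂ : S) : Prop := ∃ B, IsPBSupInf L B ∧ B s₁ s₂

/-- Classical bisimilarity of the underlying LTS of a fully nondeterministic
NPLTS, where `s →a s'` means `s →a D` with `D(s') = 1`. -/
def BFnd (s₁ s₂ : S) : Prop :=
  ∃ B : S → S → Prop, Equivalence B ∧
    (∀ t₁ t₂, B t₁ t₂ → ∀ a t₁', (∃ D, L.trans t₁ a D ∧ D t₁' = 1) →
      ∃ t₂', (∃ D, L.trans t₂ a D ∧ D t₂' = 1) ∧ B t₁' t₂') ∧
    B s₁ s₂

end Bisimulations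

end
/-- The ready-decorated trace of a computation. -/
noncomputable def decoOf {S A Z : Type} (L : NPLTS S A) (corr : Z → S) (c : List (A × Z)) :
    List (A × Set A) := c.map fun p => (p.1, L.enabled (corr p.2))

theorem decoComp_iff {S A Z : Type} (L : NPLTS S A) (P : Set A → Set A → Prop) (corr : Z → S)
    (c : List (A × Z)) (φ : List (A × Set A)) :
    decoComp (fun t F => P (L.enabled t) F) corr c φ ↔
      List.Forall₂ (fun p q : A × Set A => p.1 = q.1 ∧ P p.2 q.2) (decoOf L corr c) φ := by
  induction c generalizing φ with
  | nil => cases φ <;> simp [decoComp, decoOf]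
  | cons x c ih =>
    obtain ⟨a, z⟩ := x
    cases φ with
    | nil => simp [decoComp, decoOf]
    | cons y φ =>
      obtain ⟨b, X⟩ := y
      have := ih φ
      simp only [decoOf] at this
      simp [decoComp, decoOf, this, and_assoc]

theorem forall₂_prod_eq {A : Type} (l m : List (A × Set A)) :
    List.Forall₂ (fun p q : A × Set A => p.1 = q.1 ∧ p.2 = q.2) l m ↔ l = m := by
  have : (fun p q : A × Set A => p.1 = q.1 ∧ p.2 = q.2) = Eq := by
    funext p q; simp [Prod.ext_iff]
  rw [this, List.forall₂_eq_eq_eq]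

theorem rtcc_eq {S A : Type} {L : NPLTS S A} {s : S} (R : Resolution L s) (ρ : List (A × Set A)) :
    R.rtcc ρ = {c | R.lts.IsComp R.init c ∧ decoOf L R.corr c = ρ} := by
  ext c
  have h := decoComp_iff L (fun X Y => X = Y) R.corr c ρ
  rw [forall₂_prod_eq] at h
  simp only [Resolution.rtcc, Set.mem_ofPred_eq]
  rw [h]

/-- Compatibility of a ready trace with a failure trace. -/
def ftCompat {A : Type} (ρ φ : List (A × Set A)) : Prop :=
  List.Forall₂ (fun p q : A × Set A => p.1 = q.1 ∧ ∀ f ∈ q.2, f ∉ p.2) ρ φ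

theorem ftcc_eq {S A : Type} {L : NPLTS S A} {s : S} (R : Resolution L s) (φ : List (A × Set A)) :
    R.ftcc φ = {c | R.lts.IsComp R.init c ∧ ftCompat (decoOf L R.corr c) φ} := by
  ext c
  have h := decoComp_iff L (fun X Y => ∀ f ∈ Y, f ∉ X) R.corr c φ
  simp only [Resolution.ftcc, Set.mem_ofPred_eq, ftCompat]
  rw [h]

open Classical in
theorem prob_decomp {S A : Type} {L : NPLTS S A} {s : S} (R : Resolution L s)
    (Q : List (A × Set A) → Prop) :
    R.prob {c | R.lts.IsComp R.init c ∧ Q (decoOf L R.corr c)} =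
      ∑' ρ, if Q ρ then R.prob (R.rtcc ρ) else 0 := by
  simp only [Resolution.prob, NPLTS.probSet]
  have h1 : ∀ ρ, (if Q ρ then ∑' c : R.rtcc ρ,
      R.lts.compProb R.init (c : List (A × R.State)) else 0) =
      ∑' c : List (A × R.State), if ρ = decoOf L R.corr c then
        (if R.lts.IsComp R.init c ∧ Q (decoOf L R.corr c) then R.lts.compProb R.init c else 0)
        else 0 := by
    intro ρ
    rw [rtcc_eq, tsum_subtype]
    split_ifs with hQ
    · refine tsum_congr fun c => ?_
      by_cases h : ρ = decoOf L R.corr c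
      · subst h; simp [Set.indicator, hQ]
      · simp [Set.indicator, h, Ne.symm h]
    · symm
      rw [ENNReal.tsum_eq_zero]
      intro c
      by_cases h : ρ = decoOf L R.corr c
      · subst h; simp [hQ]
      · simp [h]
  rw [tsum_congr h1, ENNReal.tsum_comm, tsum_subtype]
  refine tsum_congr fun c => ?_
  rw [tsum_ite_eq]
  simp [Set.indicator]

open Classical in
theorem trace_sum_le_one {A Z : Type} (M : NPLTS Z A)
    (det : ∀ z a₁ a₂ D₁ D₂, M.trans z a₁ D₁ → M.trans z a₂ D₂ → a₁ = a₂ ∧ D₁ = D₂)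
    (α : List A) (z : Z) :
    (∑' c : List (A × Z), if traceOf c = α then M.compProb z c else 0) ≤ 1 := by
  induction α generalizing z with
  | nil =>
    rw [tsum_eq_single []]
    · simp [traceOf, NPLTS.compProb]
    · intro c hc
      simp [traceOf, hc]
  | cons a α ih =>
    let g : Z × List (A × Z) → List (A × Z) := fun p => (a, p.1) :: p.2
    have hg : Function.Injective g := by
      rintro ⟨z, c⟩ ⟨z', c'⟩ h
      simpa [g] using h
    rw [← hg.tsum_eq]
    · rw [ENNReal.tsum_prod']
      have h2 : ∀ z' : Z, (∑' c : List (A × Z), if traceOf (g (z', c)) = a :: α then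
          M.compProb z (g (z', c)) else 0) ≤ ⨆ (D : PMF Z) (_ : M.trans z a D), D z' := by
        intro z'
        have h3 : ∀ c : List (A × Z), (if traceOf (g (z', c)) = a :: α then
          M.compProb z (g (z', c)) else 0) = (⨆ (D : PMF Z) (_ : M.trans z a D), D z') *
            (if traceOf c = α then M.compProb z' c else 0) := by
          intro c
          by_cases hc : List.map Prod.fst c = α <;> simp [g, traceOf, NPLTS.compProb, hc]
        rw [tsum_congr h3, ENNReal.tsum_mul_left]
        exact mul_le_of_le_one_right' (ih z')
      refine (ENNReal.tsum_le_tsum h2).trans ?_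
      by_cases hD : ∃ D, M.trans z a D
      · obtain ⟨D, hD⟩ := hD
        rw [← D.tsum_coe]
        refine ENNReal.tsum_le_tsum fun z' => ?_
        refine iSup₂_le fun D' hD' => ?_
        rw [(det z a a D' D hD' hD).2]
      · push Not at hD
        simp [hD]
    · intro c hc
      rcases c with _ | ⟨⟨b, z'⟩, c⟩
      · simp [traceOf] at hc
      · simp only [traceOf, Function.mem_support, List.map_cons, List.cons.injEq] at hc
        have : b = a := by
          by_contra h; simp [h] at hc
        exact ⟨(z', c), by simp [g, this]⟩

/-- Componentwise inclusion of ready traces. -/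
def leC {A : Type} (ρ X : List (A × Set A)) : Prop :=
  List.Forall₂ (fun p q : A × Set A => p.1 = q.1 ∧ p.2 ⊆ q.2) ρ X

theorem leC_refl {A : Type} (X : List (A × Set A)) : leC X X := by
  induction X with
  | nil => exact List.Forall₂.nil
  | cons x X ih => exact List.Forall₂.cons ⟨rfl, subset_rfl⟩ ih

/-- The failure trace whose failure sets are the complements. -/
def compl' {A : Type} (X : List (A × Set A)) : List (A × Set A) := X.map fun p => (p.1, p.2ᶜ)

theorem ftCompat_compl {A : Type} (ρ X : List (A × Set A)) : ftCompat ρ (compl' X) ↔ leC ρ X := by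
  simp only [ftCompat, compl', leC, List.forall₂_map_right_iff]
  have : (fun p q : A × Set A => p.1 = q.1 ∧ ∀ f ∈ q.2ᶜ, f ∉ p.2) =
      fun p q : A × Set A => p.1 = q.1 ∧ p.2 ⊆ q.2 := by
    funext p q
    simp only [Set.mem_compl_iff, not_imp_not]
    rfl
  exact iff_of_eq (congrArg (fun r => List.Forall₂ r ρ X) this)

theorem leC_trace {A : Type} {ρ X : List (A × Set A)} (h : leC ρ X) :
    ρ.map Prod.fst = X.map Prod.fst := by
  induction h with
  | nil => rfl
  | cons h _ ih => simp [h.1, ih]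

open Classical in
theorem prob_le_one {S A : Type} {L : NPLTS S A} {s : S} (R : Resolution L s)
    (X : List (A × Set A)) :
    R.prob {c | R.lts.IsComp R.init c ∧ leC (decoOf L R.corr c) X} ≤ 1 := by
  refine le_trans ?_ (trace_sum_le_one R.lts R.det (X.map Prod.fst) R.init)
  simp only [Resolution.prob, NPLTS.probSet]
  rw [tsum_subtype]
  refine ENNReal.tsum_le_tsum fun c => ?_
  by_cases h : c ∈ {c | R.lts.IsComp R.init c ∧ leC (decoOf L R.corr c) X}
  · have h1 : traceOf c = X.map Prod.fst := by
      rw [← leC_trace h.2]; simp [traceOf, decoOf, Function.comp_def]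
    rw [Set.indicator_of_mem h, if_pos h1]
  · rw [Set.indicator_of_notMem h]; exact zero_le

/-- Total cardinality. -/
noncomputable def totCard {A : Type} (X : List (A × Set A)) : ℕ := (X.map fun p => p.2.ncard).sum

theorem totCard_lt {A : Type} {ρ X : List (A × Set A)} (h : leC ρ X)
    (hX : ∀ p ∈ X, p.2.Finite) :
    (∀ p ∈ ρ, p.2.Finite) ∧ totCard ρ ≤ totCard X ∧ (ρ ≠ X → totCard ρ < totCard X) := by
  induction h with
  | nil => simp
  | @cons p q ρ X h _ ih =>
    obtain ⟨i1, i2, i3⟩ := ih fun p hp => hX p (List.mem_cons_of_mem _ hp)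
    have hq := hX q List.mem_cons_self
    have hle := Set.ncard_le_ncard h.2 hq
    simp only [totCard, List.map_cons, List.sum_cons] at *
    refine ⟨?_, by omega, ?_⟩
    · intro r hr
      rcases List.mem_cons.1 hr with rfl | hr
      · exact hq.subset h.2
      · exact i1 r hr
    · intro hne
      by_cases he : ρ = X
      · have hpq : p.2 ≠ q.2 := by
          intro e; exact hne (by rw [he, Prod.ext h.1 e])
        have := Set.ncard_lt_ncard (h.2.ssubset_of_ne hpq) hq
        omega
      · have := i3 he
        omega

open Classical in
theorem tsum_split {ι : Type} (f : ι → ENNReal) (X : ι) :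
    ∑' i, f i = f X + ∑' i, if i = X then 0 else f i := by
  rw [ENNReal.tsum_eq_add_tsum_ite X]

open Classical in
theorem inversion {A : Type} (m₁ m₂ : List (A × Set A) → ENNReal)
    (hfin : ∀ X, (∑' ρ, if leC ρ X then m₂ ρ else 0) ≤ 1)
    (heq : ∀ X, (∑' ρ, if leC ρ X then m₁ ρ else 0) = ∑' ρ, if leC ρ X then m₂ ρ else 0) :
    ∀ (n : ℕ) (X : List (A × Set A)), totCard X = n → (∀ p ∈ X, p.2.Finite) → m₁ X = m₂ X := by
  intro n
  induction n using Nat.strong_induction_on with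
  | _ n ih =>
    intro X hn hX
    have h := heq X
    have hf := hfin X
    rw [tsum_split _ X] at hf
    rw [tsum_split _ X, tsum_split (fun ρ => if leC ρ X then m₂ ρ else 0) X] at h
    have hc : (∑' ρ : List (A × Set A), @ite _ (ρ = X) (propDecidable _) 0 (if leC ρ X then m₁ ρ else 0)) =
        ∑' ρ : List (A × Set A), @ite _ (ρ = X) (propDecidable _) 0 (if leC ρ X then m₂ ρ else 0) := by
      refine tsum_congr fun ρ => ?_
      split_ifs with h1 h2
      · rfl
      · obtain ⟨a, _, b⟩ := totCard_lt h2 hX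
        exact ih _ (hn ▸ b h1) ρ rfl a
      · rfl
    rw [hc] at h
    have hne : (∑' ρ : List (A × Set A), @ite _ (ρ = X) (propDecidable _) 0 (if leC ρ X then m₂ ρ else 0)) ≠ ⊤ :=
      ne_top_of_le_ne_top ENNReal.one_ne_top (le_trans le_add_self hf)
    have := (ENNReal.add_left_inj hne).1 h
    simpa [leC_refl] using this

theorem enabled_finite {S A : Type} {L : NPLTS S A} (hfb : L.FinitelyBranching) (s : S) :
    (L.enabled s).Finite := by
  refine ((hfb s).image Prod.fst).subset ?_
  rintro a ⟨D, hD⟩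
  exact ⟨(a, D), hD, rfl⟩

theorem rtcc_infinite {S A : Type} {L : NPLTS S A} (hfb : L.FinitelyBranching) {s : S}
    (R : Resolution L s) (X : List (A × Set A)) (hX : ¬ ∀ p ∈ X, p.2.Finite) :
    R.prob (R.rtcc X) = 0 := by
  have : R.rtcc X = ∅ := by
    rw [rtcc_eq]
    refine Set.eq_empty_of_forall_notMem ?_
    rintro c ⟨-, rfl⟩
    apply hX
    intro p hp
    obtain ⟨q, -, rfl⟩ := List.mem_map.1 hp
    exact enabled_finite hfb _
  rw [this]
  simp [Resolution.prob, NPLTS.probSet]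

theorem rt_iff_ft {S A : Type} {L : NPLTS S A} (hfb : L.FinitelyBranching) {s t : S}
    (R₁ : Resolution L s) (R₂ : Resolution L t) :
    (∀ ρ, R₁.prob (R₁.rtcc ρ) = R₂.prob (R₂.rtcc ρ)) ↔
      ∀ φ, R₁.prob (R₁.ftcc φ) = R₂.prob (R₂.ftcc φ) := by
  constructor
  · intro h φ
    rw [ftcc_eq, ftcc_eq, prob_decomp R₁ (fun ρ => ftCompat ρ φ),
      prob_decomp R₂ (fun ρ => ftCompat ρ φ)]
    simp only [h]
  · intro h X
    by_cases hX : ∀ p ∈ X, p.2.Finite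
    · refine inversion (fun ρ => R₁.prob (R₁.rtcc ρ)) (fun ρ => R₂.prob (R₂.rtcc ρ))
        ?_ ?_ _ X rfl hX
      · intro Y
        rw [← prob_decomp R₂ (fun ρ => leC ρ Y)]
        exact prob_le_one R₂ Y
      · intro Y
        rw [← prob_decomp R₁ (fun ρ => leC ρ Y), ← prob_decomp R₂ (fun ρ => leC ρ Y)]
        have := h (compl' Y)
        simpa only [ftcc_eq, ftCompat_compl] using this
    · rw [rtcc_infinite hfb R₁ X hX, rtcc_infinite hfb R₂ X hX]

/-- over finitely-branching NPLTS models, `≈_{PRTr,dis} = ≈_{PFTr,dis}`. -/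
theorem prtr_dis_eq_pftr_dis_of_finitelyBranching
    {S A : Type} [Countable S] [Countable A] (L : NPLTS S A)
    (hfb : L.FinitelyBranching) (s₁ s₂ : S) :
    PRTrDis L s₁ s₂ ↔ PFTrDis L s₁ s₂ := by
  simp only [PRTrDis, PFTrDis, rt_iff_ft hfb]
end

section
/- Over finitely-branching NPLTS models, probabilistic readiness-distribution equivalence coincides with probabilistic failure-distribution equivalence: for every finitely-branching NPLTS (S, A, →) and all s1, s2 ∈ S, s1 ≈_{PR,dis} s2 if and only if s1 ≈_{PF,dis} s2. -/
open scoped ENNReal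
open Classical

theorem aux_mass_le {S A : Type} {L : NPLTS S A} {s : S} (R : Resolution L s) (α : List A) :
    ∀ z : R.State, ∑' c : {c : List (A × R.State) // traceOf c = α},
      R.lts.compProb z c.1 ≤ 1 := by
  induction α with
  | nil =>
    intro z
    have h : ∀ c : {c : List (A × R.State) // traceOf c = []}, c = ⟨[], rfl⟩ := by
      rintro ⟨c, hc⟩
      apply Subtype.ext
      simpa [traceOf] using hc
    rw [tsum_eq_single ⟨[], rfl⟩ (fun c hc => absurd (h c) hc)]
    simp [NPLTS.compProb]
  | cons a α ih =>
    intro z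
    let g : R.State × {c : List (A × R.State) // traceOf c = α} →
        {c : List (A × R.State) // traceOf c = a :: α} :=
      fun p => ⟨(a, p.1) :: p.2.1, by
        have := p.2.2
        simp only [traceOf] at this ⊢
        simp [this]⟩
    have hg : Function.Surjective g := by
      rintro ⟨c, hc⟩
      cases c with
      | nil => simp [traceOf] at hc
      | cons p c =>
        obtain ⟨b, z'⟩ := p
        simp only [traceOf, List.map_cons, List.cons.injEq] at hc
        obtain ⟨hb, hc'⟩ := hc
        subst hb
        refine ⟨(z', ⟨c, hc'⟩), rfl⟩
    refine (ENNReal.tsum_le_tsum_comp_of_surjective hg _).trans ?_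
    rw [ENNReal.tsum_prod']
    simp only [g, NPLTS.compProb, ENNReal.tsum_mul_left]
    have h1 : ∑' z', (⨆ (D : PMF R.State) (_ : R.lts.trans z a D), D z') ≤ 1 := by
      by_cases h : ∃ D, R.lts.trans z a D
      · obtain ⟨D, hD⟩ := h
        rw [← D.tsum_coe]
        refine ENNReal.tsum_le_tsum fun z' => iSup₂_le fun D' hD' => ?_
        rw [(R.det z a a D D' hD hD').2]
      · have h0 : ∀ D, ¬ R.lts.trans z a D := fun D hD => h ⟨D, hD⟩
        simp [h0]
    refine le_trans (ENNReal.tsum_le_tsum fun z' => ?_) h1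
    exact mul_le_of_le_one_right' (ih z')

theorem aux_prob_eq {S A : Type} {L : NPLTS S A} {s : S} (R : Resolution L s)
    (C : Set (List (A × R.State))) :
    R.prob C = ∑' c, C.indicator (fun c => R.lts.compProb R.init c) c :=
  tsum_subtype C _

theorem aux_fcc_le {S A : Type} {L : NPLTS S A} {s : S} (R : Resolution L s) (α : List A)
    (F : Set A) : R.prob (R.fcc α F) ≤ 1 := by
  refine le_trans ?_ (aux_mass_le R α R.init)
  rw [aux_prob_eq]
  refine le_trans (ENNReal.tsum_le_tsum fun c => ?_)
    (tsum_subtype {c : List (A × R.State) | traceOf c = α} _).ge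
  exact Set.indicator_le_indicator_of_subset (fun c hc => hc.1.2) (fun _ => zero_le) c

theorem aux_fcc_eq {S A : Type} {L : NPLTS S A} {s : S} (R : Resolution L s) (α : List A)
    (F : Set A) : R.prob (R.fcc α F) =
      ∑' X : Set A, if Disjoint F X then R.prob (R.rcc α X) else 0 := by
  have h : ∀ X : Set A, (if Disjoint F X then R.prob (R.rcc α X) else 0) =
      ∑' c, if Disjoint F X then
        (R.rcc α X).indicator (fun c => R.lts.compProb R.init c) c else 0 := by
    intro X
    split_ifs
    · exact aux_prob_eq _ _
    · simp
  simp only [h]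
  rw [ENNReal.tsum_comm, aux_prob_eq]
  refine tsum_congr fun c => ?_
  rw [tsum_eq_single (L.enabled (R.corr (lastState R.init c)))]
  · simp only [Set.indicator_apply, Resolution.fcc, Resolution.rcc, Set.mem_ofPred_eq,
      Set.disjoint_left, and_true]
    split_ifs <;> tauto
  · intro X hX
    have : c ∉ R.rcc α X := fun hc => hX hc.2.symm
    simp [this]

theorem aux_split {S A : Type} {L : NPLTS S A} {s : S} (R : Resolution L s) (α : List A)
    (X : Set A) : R.prob (R.fcc α Xᶜ) = R.prob (R.rcc α X) +
      ∑' Y : Set A, if Y ⊂ X then R.prob (R.rcc α Y) else 0 := by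
  rw [aux_fcc_eq, ENNReal.tsum_eq_add_tsum_ite X]
  congr 1
  · simp [disjoint_compl_left]
  · refine tsum_congr fun Y => ?_
    simp only [Set.disjoint_compl_left_iff_subset, ssubset_iff_subset_ne]
    split_ifs <;> tauto

theorem aux_rcc_of_fcc {S A : Type} {L : NPLTS S A} (hfb : L.FinitelyBranching) {s t : S}
    (R : Resolution L s) (Q : Resolution L t)
    (h : ∀ (α : List A) (F : Set A), R.prob (R.fcc α F) = Q.prob (Q.fcc α F))
    (α : List A) (X : Set A) : R.prob (R.rcc α X) = Q.prob (Q.rcc α X) := by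
  by_cases hX : X.Finite
  · induction hn : X.ncard using Nat.strong_induction_on generalizing X with
    | _ n ih =>
      have hs : (∑' Y : Set A, if Y ⊂ X then R.prob (R.rcc α Y) else 0) =
          ∑' Y : Set A, if Y ⊂ X then Q.prob (Q.rcc α Y) else 0 := by
        refine tsum_congr fun Y => ?_
        split_ifs with hY
        · exact ih Y.ncard (hn ▸ Set.ncard_lt_ncard hY hX) Y (hX.subset hY.subset) rfl
        · rfl
      have h1 := h α Xᶜ
      have h2 := aux_fcc_le R α Xᶜ
      rw [aux_split] at h2
      rw [aux_split, aux_split, ← hs] at h1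
      have h3 : (∑' Y : Set A, if Y ⊂ X then R.prob (R.rcc α Y) else 0) ≠ ⊤ :=
        ne_top_of_le_ne_top ENNReal.one_ne_top (le_trans le_add_self h2)
      exact (ENNReal.add_left_inj h3).1 h1
  · have he : ∀ u, L.enabled u ≠ X := by
      intro u hu
      apply hX
      rw [← hu]
      refine ((hfb u).image Prod.fst).subset ?_
      rintro a ⟨D, hD⟩
      exact ⟨(a, D), hD, rfl⟩
    simp [aux_prob_eq, Resolution.rcc, he]

theorem aux_iff {S A : Type} {L : NPLTS S A} (hfb : L.FinitelyBranching) {s t : S}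
    (R : Resolution L s) (Q : Resolution L t) :
    (∀ (α : List A) (X : Set A), R.prob (R.rcc α X) = Q.prob (Q.rcc α X)) ↔
    (∀ (α : List A) (F : Set A), R.prob (R.fcc α F) = Q.prob (Q.fcc α F)) := by
  constructor
  · intro h α F
    simp only [aux_fcc_eq, h]
  · exact aux_rcc_of_fcc hfb R Q

/-- over finitely-branching NPLTS models, `≈_{PR,dis} = ≈_{PF,dis}`. -/
theorem pr_dis_eq_pf_dis_of_finitelyBranching
    {S A : Type} [Countable S] [Countable A] (L : NPLTS S A)
    (hfb : L.FinitelyBranching) (s₁ s₂ : S) :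
    PRDis L s₁ s₂ ↔ PFDis L s₁ s₂ := by
  simp only [PRDis, PFDis, aux_iff hfb]
end

section
/- For every NPLTS (S, A, →) and all states s1, s2 ∈ S, the following chain of inclusions holds among the distribution-based equivalences: s1 ≈_{PFTr,dis} s2 implies s1 ≈_{PF,dis} s2, which implies s1 ≈_{PCTr,dis} s2, which implies s1 ≈_{PTr,dis} s2. -/
open scoped ENNReal
open Classical

/-- The failure trace with empty failure sets except for `F` at the end. -/
def failTr {A : Type} (F : Set A) : A → List A → List (A × Set A)
  | a, [] => [(a, F)]
  | a, b :: β => (a, ∅) :: failTr F b β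

theorem decoComp_failTr {S A Z : Type} (L : NPLTS S A) (corr : Z → S) (F : Set A) :
    ∀ (β : List A) (a : A) (z : Z) (c : List (A × Z)),
      decoComp (fun t F => ∀ f ∈ F, f ∉ L.enabled t) corr c (failTr F a β) ↔
        traceOf c = a :: β ∧ ∀ f ∈ F, f ∉ L.enabled (corr (lastState z c)) := by
  intro β
  induction β with
  | nil =>
    intro a z c
    match c with
    | [] => simp [failTr, decoComp, traceOf]
    | [(x, y)] => simp [failTr, decoComp, traceOf, lastState]
    | (x, y) :: p :: c => simp [failTr, decoComp, traceOf]
  | cons b β ih =>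
    intro a z c
    match c with
    | [] => simp [failTr, decoComp, traceOf]
    | (x, y) :: c =>
      have := ih b y c
      simp only [failTr, decoComp, this]
      simp [traceOf, lastState, and_assoc]

theorem ftcc_failTr {S A : Type} {L : NPLTS S A} {s : S} (R : Resolution L s) (F : Set A)
    (a : A) (β : List A) : R.ftcc (failTr F a β) = R.fcc (a :: β) F := by
  ext c
  simp only [Resolution.ftcc, Resolution.fcc, Resolution.cc, Set.mem_setOf_eq,
    decoComp_failTr L R.corr F β a R.init c, and_assoc]

/-- The resolution performing a single given transition. -/
def oneStep {S A : Type} [Countable S] (L : NPLTS S A) (s : S) (a : A) (D : PMF S)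
    (h : L.trans s a D) : Resolution L s where
  State := S
  countable := inferInstance
  lts := ⟨fun z b E => z = s ∧ b = a ∧ E = D⟩
  corr := id
  init := s
  corr_init := rfl
  mimic := by
    rintro z b E ⟨rfl, rfl, rfl⟩
    exact ⟨E, h, fun _ => rfl⟩
  det := by
    rintro z a₁ a₂ D₁ D₂ ⟨_, rfl, rfl⟩ ⟨_, rfl, rfl⟩
    exact ⟨rfl, rfl⟩

theorem enabled_sub {S A : Type} [Countable S] (L : NPLTS S A) (s₁ s₂ : S)
    (h : ∀ R₁ : Resolution L s₁, ∃ R₂ : Resolution L s₂, ∀ φ : List (A × Set A),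
      R₁.prob (R₁.ftcc φ) = R₂.prob (R₂.ftcc φ)) : L.enabled s₁ ⊆ L.enabled s₂ := by
  rintro a ⟨D, hD⟩
  obtain ⟨R₂, hR⟩ := h (oneStep L s₁ a D hD)
  have h1 := hR [(a, ∅)]
  obtain ⟨t, ht⟩ := D.support_nonempty
  have hne : (oneStep L s₁ a D hD).prob ((oneStep L s₁ a D hD).ftcc [(a, ∅)]) ≠ 0 := by
    intro h0
    unfold Resolution.prob NPLTS.probSet at h0
    rw [ENNReal.tsum_eq_zero] at h0
    have hmem : ([(a, t)] : List (A × S)) ∈ (oneStep L s₁ a D hD).ftcc [(a, ∅)] := by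
      refine ⟨⟨⟨D, ⟨rfl, rfl, rfl⟩, ht⟩, trivial⟩, rfl, ?_, trivial⟩
      intro f hf
      exact absurd hf (Set.notMem_empty f)
    have h2 := h0 ⟨_, hmem⟩
    simp only [NPLTS.compProb, mul_one] at h2
    have h3 := ENNReal.iSup_eq_zero.1 h2 D
    have h4 := ENNReal.iSup_eq_zero.1 h3 ⟨rfl, rfl, rfl⟩
    exact (D.mem_support_iff t).1 ht h4
  rw [h1] at hne
  have hN : (R₂.ftcc [(a, ∅)]).Nonempty := by
    by_contra hc
    rw [Set.not_nonempty_iff_eq_empty] at hc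
    apply hne
    rw [hc]
    simp [Resolution.prob, NPLTS.probSet]
  obtain ⟨c, hc1, hc2⟩ := hN
  match c, hc1, hc2 with
  | (x, y) :: c, hc1, hc2 =>
    obtain ⟨⟨E, hE, _⟩, _⟩ := hc1
    obtain ⟨rfl, _⟩ := hc2
    obtain ⟨E', hE', _⟩ := R₂.mimic _ _ _ hE
    rw [R₂.corr_init] at hE'
    exact ⟨E', hE'⟩

theorem prob_fcc_nil {S A : Type} {L : NPLTS S A} {s : S} (R : Resolution L s) (F : Set A) :
    R.prob (R.fcc [] F) = if ∀ f ∈ F, f ∉ L.enabled s then 1 else 0 := by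
  have key : R.fcc [] F = {c | c = [] ∧ ∀ f ∈ F, f ∉ L.enabled s} := by
    ext c
    cases c with
    | nil => simp [Resolution.fcc, Resolution.cc, NPLTS.IsComp, traceOf, lastState, R.corr_init]
    | cons p c => simp [Resolution.fcc, Resolution.cc, traceOf]
  rw [key]
  split_ifs with h
  · have : {c : List (A × R.State) | c = [] ∧ ∀ f ∈ F, f ∉ L.enabled s} = {[]} := by
      ext c
      exact ⟨fun hc => hc.1, fun hc => ⟨hc, h⟩⟩
    rw [this, Resolution.prob, NPLTS.probSet, tsum_singleton ([] : List (A × R.State))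
      (fun c => R.lts.compProb R.init c)]
    rfl
  · have : {c : List (A × R.State) | c = [] ∧ ∀ f ∈ F, f ∉ L.enabled s} = ∅ := by
      ext c
      exact ⟨fun hc => h hc.2, fun hc => hc.elim⟩
    rw [this]
    simp [Resolution.prob, NPLTS.probSet]

theorem fcc_of_ftcc {S A : Type} {L : NPLTS S A} {s₁ s₂ : S}
    (he : L.enabled s₁ = L.enabled s₂) (R₁ : Resolution L s₁) (R₂ : Resolution L s₂)
    (h : ∀ φ : List (A × Set A), R₁.prob (R₁.ftcc φ) = R₂.prob (R₂.ftcc φ))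
    (α : List A) (F : Set A) : R₁.prob (R₁.fcc α F) = R₂.prob (R₂.fcc α F) := by
  cases α with
  | nil => rw [prob_fcc_nil, prob_fcc_nil, he]
  | cons a β => rw [← ftcc_failTr, ← ftcc_failTr, h]

theorem fcc_empty {S A : Type} {L : NPLTS S A} {s : S} (R : Resolution L s) (α : List A) :
    R.fcc α ∅ = R.cc α := by
  ext c
  simp [Resolution.fcc]

theorem fcc_univ {S A : Type} {L : NPLTS S A} {s : S} (R : Resolution L s) (α : List A) :
    R.fcc α Set.univ = R.ccc α := by
  ext c
  simp [Resolution.fcc, Resolution.ccc, NPLTS.enabled, NPLTS.hasTrans]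

/-- `≈_{PFTr,dis} ⊆ ≈_{PF,dis} ⊆ ≈_{PCTr,dis} ⊆ ≈_{PTr,dis}`. -/
theorem dis_chain
    {S A : Type} [Countable S] [Countable A] (L : NPLTS S A) (s₁ s₂ : S) :
    (PFTrDis L s₁ s₂ → PFDis L s₁ s₂) ∧
    (PFDis L s₁ s₂ → PCTrDis L s₁ s₂) ∧
    (PCTrDis L s₁ s₂ → PTrDis L s₁ s₂) := by
  refine ⟨?_, ?_, ?_⟩
  · rintro ⟨h1, h2⟩
    have he : L.enabled s₁ = L.enabled s₂ :=
      Set.Subset.antisymm (enabled_sub L _ _ h1) (enabled_sub L _ _ h2)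
    refine ⟨fun R => ?_, fun R => ?_⟩
    · obtain ⟨R', h⟩ := h1 R
      exact ⟨R', fcc_of_ftcc he R R' h⟩
    · obtain ⟨R', h⟩ := h2 R
      exact ⟨R', fcc_of_ftcc he.symm R R' h⟩
  · rintro ⟨h1, h2⟩
    refine ⟨fun R => ?_, fun R => ?_⟩
    · obtain ⟨R', h⟩ := h1 R
      refine ⟨R', R', fun α => ?_⟩
      rw [← fcc_empty, ← fcc_empty, ← fcc_univ, ← fcc_univ]
      exact ⟨h _ _, h _ _⟩
    · obtain ⟨R', h⟩ := h2 R
      refine ⟨R', R', fun α => ?_⟩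
      rw [← fcc_empty, ← fcc_empty, ← fcc_univ, ← fcc_univ]
      exact ⟨h _ _, h _ _⟩
  · rintro ⟨h1, h2⟩
    refine ⟨fun R => ?_, fun R => ?_⟩
    · obtain ⟨R', _, h⟩ := h1 R
      exact ⟨R', fun α => (h α).1⟩
    · obtain ⟨R', _, h⟩ := h2 R
      exact ⟨R', fun α => (h α).1⟩
end

section
/- For every NPLTS (S, A, →) and all states s1, s2 ∈ S, the following chain of inclusions holds among the equivalences based on extremal probabilities: s1 ≈_{PFTr,⊔⊓} s2 implies s1 ≈_{PF,⊔⊓} s2, which implies s1 ≈_{PCTr,⊔⊓} s2, which implies s1 ≈_{PTr,⊔⊓} s2. -/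
open scoped ENNReal
open Classical

theorem decoComp_last {S A Z : Type} (L : NPLTS S A) (corr : Z → S) (F : Set A) (a : A)
    (β : List A) : ∀ (z : Z) (c : List (A × Z)),
    decoComp (fun t F => ∀ f ∈ F, f ∉ L.enabled t) corr c
      (β.map (fun b => (b, (∅ : Set A))) ++ [(a, F)]) ↔
    traceOf c = β ++ [a] ∧ ∀ f ∈ F, f ∉ L.enabled (corr (lastState z c)) := by
  induction β with
  | nil =>
    intro z c
    rcases c with _ | ⟨⟨b, y⟩, _ | ⟨⟨b', y'⟩, c⟩⟩ <;> simp [decoComp, traceOf, lastState]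
  | cons b β ih =>
    intro z c
    rcases c with _ | ⟨⟨b', y⟩, c⟩
    · simp [decoComp, traceOf]
    · have := ih y c
      simp only [traceOf] at this
      simp [decoComp, traceOf, lastState, this, and_assoc]

theorem ftcc_eq_fcc {S A : Type} {L : NPLTS S A} {s : S} (R : Resolution L s)
    (β : List A) (a : A) (F : Set A) :
    R.ftcc (β.map (fun b => (b, (∅ : Set A))) ++ [(a, F)]) = R.fcc (β ++ [a]) F := by
  ext c
  simp only [Resolution.ftcc, Resolution.fcc, Resolution.cc, Set.mem_setOf_eq,
    decoComp_last L R.corr F a β R.init c, and_assoc]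

theorem ftccVals_eq_fccVals {S A : Type} (L : NPLTS S A) (s : S)
    (β : List A) (a : A) (F : Set A) :
    ftccVals L s (β.map (fun b => (b, (∅ : Set A))) ++ [(a, F)]) =
      fccVals L s (β ++ [a]) F := by
  have h : (β.map (fun b => (b, (∅ : Set A))) ++ [(a, F)]).map Prod.fst = β ++ [a] := by
    simp [Function.comp_def]
  simp only [ftccVals, fccVals, h, ftcc_eq_fcc]

theorem fccVals_empty {S A : Type} (L : NPLTS S A) (s : S) (α : List A) :
    fccVals L s α ∅ = ccVals L s α := by
  simp [fccVals, ccVals, Resolution.fcc]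

theorem fccVals_univ {S A : Type} (L : NPLTS S A) (s : S) (α : List A) :
    fccVals L s α Set.univ = cccVals L s α := by
  simp [fccVals, cccVals, Resolution.fcc, Resolution.ccc, NPLTS.enabled, NPLTS.hasTrans]

/-- The one-step resolution choosing the transition from `s` to `D` labeled `a`. -/
def stepRes {S A : Type} [Countable S] (L : NPLTS S A) (s : S) (a : A) (D : PMF S)
    (h : L.trans s a D) : Resolution L s where
  State := S
  countable := inferInstance
  lts := ⟨fun z b E => z = s ∧ b = a ∧ E = D⟩
  corr := id
  init := s
  corr_init := rfl
  mimic := by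
    rintro z b E ⟨rfl, rfl, rfl⟩
    exact ⟨E, h, fun _ => rfl⟩
  det := by
    rintro z a₁ a₂ D₁ D₂ ⟨_, rfl, rfl⟩ ⟨_, rfl, rfl⟩
    exact ⟨rfl, rfl⟩

/-- The resolution without transitions. -/
def nilRes {S A : Type} [Countable S] (L : NPLTS S A) (s : S) : Resolution L s where
  State := S
  countable := inferInstance
  lts := ⟨fun _ _ _ => False⟩
  corr := id
  init := s
  corr_init := rfl
  mimic := by
    rintro z b E h
    exact h.elim
  det := by
    rintro z a₁ a₂ D₁ D₂ h
    exact h.elim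

theorem enabled_iff {S A : Type} [Countable S] (L : NPLTS S A) (s : S) (a : A) :
    a ∈ L.enabled s ↔ sSup (ccVals L s [a]) ≠ 0 := by
  constructor
  · rintro ⟨D, hD⟩ h0
    obtain ⟨t, ht⟩ := D.support_nonempty
    have hz := (sSup_eq_bot.mp h0) ((stepRes L s a D hD).prob ((stepRes L s a D hD).cc [a]))
      ⟨stepRes L s a D hD, ?_, rfl⟩
    · have hc : [(a, t)] ∈ (stepRes L s a D hD).cc [a] :=
        ⟨⟨⟨D, ⟨rfl, rfl, rfl⟩, ht⟩, trivial⟩, rfl⟩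
      have h1 := ENNReal.tsum_eq_zero.mp hz ⟨_, hc⟩
      have h2 : (⨆ (E : PMF S) (_ : (stepRes L s a D hD).lts.trans s a E), E t) * 1 = 0 := h1
      rw [mul_one] at h2
      have h3 : D t ≤ ⨆ (E : PMF S) (_ : (stepRes L s a D hD).lts.trans s a E), E t :=
        le_iSup₂_of_le D ⟨rfl, rfl, rfl⟩ le_rfl
      rw [h2] at h3
      exact (D.mem_support_iff t).mp ht (le_antisymm h3 bot_le)
    · rintro ⟨c, -, hn, c', -, htr, -, hl⟩
      have : c'.length = 1 := by simpa [traceOf] using congrArg List.length htr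
      have hc : c = [] := List.length_eq_zero_iff.mp (by omega)
      subst hc
      exact hn ⟨a, D, rfl, rfl, rfl⟩
  · intro h
    by_contra hne
    apply h
    refine sSup_eq_bot.mpr ?_
    rintro p ⟨R, -, rfl⟩
    refine ENNReal.tsum_eq_zero.mpr ?_
    rintro ⟨c, hc, htr⟩
    exfalso
    rcases c with _ | ⟨⟨b, y⟩, c⟩
    · simp [traceOf] at htr
    · obtain ⟨rfl, -⟩ : b = a ∧ c = [] := by simpa [traceOf] using htr
      obtain ⟨⟨E, hE, -⟩, -⟩ := hc
      obtain ⟨D', hD', -⟩ := R.mimic _ _ _ hE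
      rw [R.corr_init] at hD'
      exact hne ⟨D', hD'⟩

theorem fccVals_nil_sub {S A : Type} [Countable S] (L : NPLTS S A) (s t : S)
    (h : L.enabled s = L.enabled t) (F : Set A) :
    fccVals L s [] F ⊆ fccVals L t [] F := by
  have key : ∀ (u : S) (R : Resolution L u), R.prob (R.fcc [] F) =
      if ∀ f ∈ F, f ∉ L.enabled u then 1 else 0 := by
    intro u R
    split_ifs with hF
    · have : R.fcc [] F = {[]} := by
        ext c
        constructor
        · rintro ⟨⟨-, h⟩, -⟩
          simpa [traceOf] using h
        · rintro rfl
          refine ⟨⟨trivial, rfl⟩, ?_⟩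
          simpa [lastState, R.corr_init] using hF
      rw [this]
      simp [Resolution.prob, NPLTS.probSet, NPLTS.compProb]
    · have : R.fcc [] F = ∅ := by
        ext c
        simp only [Set.mem_empty_iff_false, iff_false]
        rintro ⟨⟨-, h⟩, h'⟩
        obtain rfl : c = [] := by simpa [traceOf] using h
        exact hF (by simpa [lastState, R.corr_init] using h')
      rw [this]
      simp [Resolution.prob, NPLTS.probSet]
  rintro p ⟨R, -, rfl⟩
  refine ⟨nilRes L t, ?_, ?_⟩
  · rintro ⟨c, -, -, c', -, htr, -, hl⟩
    obtain rfl : c' = [] := by simpa [traceOf] using htr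
    simp at hl
  · rw [key, key, h]

/-- `≈_{PFTr,⊔⊓} ⊆ ≈_{PF,⊔⊓} ⊆ ≈_{PCTr,⊔⊓} ⊆ ≈_{PTr,⊔⊓}`. -/
theorem supinf_chain
    {S A : Type} [Countable S] [Countable A] (L : NPLTS S A) (s₁ s₂ : S) :
    (PFTrSupInf L s₁ s₂ → PFSupInf L s₁ s₂) ∧
    (PFSupInf L s₁ s₂ → PCTrSupInf L s₁ s₂) ∧
    (PCTrSupInf L s₁ s₂ → PTrSupInf L s₁ s₂) := by
  refine ⟨fun h α F => ?_, fun h α => ?_, fun h α => (h α).1⟩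
  · rcases List.eq_nil_or_concat α with rfl | ⟨β, a, rfl⟩
    · have he : L.enabled s₁ = L.enabled s₂ := by
        ext a
        have h1 := (h ([].map (fun b => (b, (∅ : Set A))) ++ [(a, ∅)])).1
        rw [ftccVals_eq_fccVals, ftccVals_eq_fccVals, fccVals_empty, fccVals_empty] at h1
        rw [enabled_iff, enabled_iff]
        exact not_congr (by rw [show [a] = [] ++ [a] from rfl, h1])
      have hs := (fccVals_nil_sub L s₁ s₂ he F).antisymm (fccVals_nil_sub L s₂ s₁ he.symm F)
      rw [hs]
      exact ⟨rfl, rfl⟩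
    · have h1 := h (β.map (fun b => (b, (∅ : Set A))) ++ [(a, F)])
      rw [ftccVals_eq_fccVals, ftccVals_eq_fccVals] at h1
      simpa using h1
  · have h1 := h α ∅
    have h2 := h α Set.univ
    rw [fccVals_empty, fccVals_empty] at h1
    rw [fccVals_univ, fccVals_univ] at h2
    exact ⟨h1, h2⟩
end

section
/- For every NPLTS (S, A, →) and all states s1, s2 ∈ S: if s1 ≈_{PB,dis} s2 then s1 ≈_{PB} s2, and if s1 ≈_{PB} s2 then s1 ≈_{PB,⊔⊓} s2. That is, probabilistic group-distribution bisimilarity is included in probabilistic bisimilarity, which is included in probabilistic ⊔⊓-bisimilarity. -/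
open scoped ENNReal
open Classical

/-- `≈_{PB,dis} ⊆ ≈_{PB} ⊆ ≈_{PB,⊔⊓}`. -/
theorem pb_dis_subset_pb_subset_pb_supinf
    {S A : Type} [Countable S] [Countable A] (L : NPLTS S A) (s₁ s₂ : S) :
    (PBDis L s₁ s₂ → PB L s₁ s₂) ∧ (PB L s₁ s₂ → PBSupInf L s₁ s₂) := by
  refine ⟨?_, ?_⟩
  · rintro ⟨B, ⟨hE, hB⟩, h⟩
    refine ⟨B, ⟨hE, ?_⟩, h⟩
    intro t₁ t₂ ht G hG a D₁ hD
    obtain ⟨D₂, h2, h3⟩ := hB t₁ t₂ ht a D₁ hD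
    exact ⟨D₂, h2, h3 G hG⟩
  · rintro ⟨B, ⟨hE, hB⟩, h⟩
    refine ⟨B, ⟨hE, ?_⟩, h⟩
    intro t₁ t₂ ht G hG a
    have key : ∀ u v, B u v → massVals L u a G ⊆ massVals L v a G := by
      rintro u v huv p ⟨D, hD, rfl⟩
      obtain ⟨D₂, h2, h3⟩ := hB u v huv G hG a D hD
      exact ⟨D₂, h2, h3⟩
    have hEn : ∀ u v, B u v → (∃ D, L.trans u a D) → ∃ D, L.trans v a D := by
      rintro u v huv ⟨D, hD⟩
      obtain ⟨D₂, h2, _⟩ := hB u v huv G hG a D hD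
      exact ⟨D₂, h2⟩
    have heq : massVals L t₁ a G = massVals L t₂ a G :=
      Set.Subset.antisymm (key _ _ ht) (key _ _ (hE.symm ht))
    exact ⟨⟨hEn _ _ ht, hEn _ _ (hE.symm ht)⟩, by rw [heq], by rw [heq]⟩
end
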